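/- arXiv:1406.6210 — 2 statements merged into one kernel-verified Lean document; each statement's English description precedes it below -/
import Mathlib

section
/- For every integer t ≥ 2, if L = 2^{2^t + 1} − 2, then M_S(L,3) = (L + 2)/8. -/
open Finset

/-- The set of differences of a codeword `I ⊆ ℤ_L`. -/
def dset {L : ℕ} (I : Finset (ZMod L)) : Finset (ZMod L) :=
  (I ×ˢ I).image fun p => p.1 - p.2

/-- The set of nonzero differences. -/
def dstar {L : ℕ} (I : Finset (ZMod L)) : Finset (ZMod L) := dset I \ {0}

/-- The set of shifted nonzero differences `d⁺(I) = d*(I) ∪ (d*(I)+1)`. -/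
def dplus {L : ℕ} (I : Finset (ZMod L)) : Finset (ZMod L) :=
  dstar I ∪ (dstar I).image (· + 1)

/-- A strongly conflict-avoiding code of length `L` and weight `ω`. -/
def IsSCAC (L ω : ℕ) (C : Finset (Finset (ZMod L))) : Prop :=
  (∀ I ∈ C, I.card = ω) ∧
  (∀ I ∈ C, (1 : ZMod L) ∉ dstar I ∧ (-1 : ZMod L) ∉ dstar I) ∧
  ∀ I ∈ C, ∀ J ∈ C, I ≠ J → Disjoint (dplus I) (dplus J)

/-- `M_S(L,ω)`: the maximum size of an SCAC of length `L` and weight `ω`. -/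
noncomputable def MS (L ω : ℕ) : ℕ :=
  sSup {n | ∃ C : Finset (Finset (ZMod L)), IsSCAC L ω C ∧ C.card = n}

lemma mem_dstar {L : ℕ} (I : Finset (ZMod L)) (x : ZMod L) :
    x ∈ dstar I ↔ x ≠ 0 ∧ ∃ u ∈ I, ∃ v ∈ I, u - v = x := by
  simp only [dstar, dset, mem_sdiff, mem_image, mem_product, mem_singleton, Prod.exists]
  constructor
  · rintro ⟨⟨u, v, ⟨h1, h2⟩, h3⟩, h⟩
    exact ⟨h, u, h1, v, h2, h3⟩
  · rintro ⟨h, u, h1, v, h2, h3⟩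
    exact ⟨⟨u, v, ⟨h1, h2⟩, h3⟩, h⟩

lemma dstar_neg {L : ℕ} (I : Finset (ZMod L)) (x : ZMod L) (h : x ∈ dstar I) : -x ∈ dstar I := by
  rw [mem_dstar] at *
  obtain ⟨h, u, h1, v, h2, h3⟩ := h
  exact ⟨neg_ne_zero.2 h, v, h2, u, h1, by rw [← h3]; ring⟩

lemma mem_dplus {L : ℕ} (I : Finset (ZMod L)) (x : ZMod L) :
    x ∈ dplus I ↔ x ∈ dstar I ∨ x - 1 ∈ dstar I := by
  simp only [dplus, mem_union, mem_image]
  constructor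
  · rintro (h | ⟨y, h, rfl⟩)
    · exact Or.inl h
    · right; simpa using h
  · rintro (h | h)
    · exact Or.inl h
    · exact Or.inr ⟨_, h, by ring⟩

lemma dplus_even {L : ℕ} (h2 : ∀ x : ZMod L, x + x ≠ 1) (I : Finset (ZMod L)) :
    Even (dplus I).card := by
  have : (∑ _x ∈ dplus I, (1 : ZMod 2)) = 0 := by
    refine Finset.sum_involution (fun x _ => 1 - x) ?_ ?_ ?_ ?_
    · intros; decide
    · intro x hx _ h
      exact h2 x (by nth_rewrite 1 [← h]; ring)
    · intro x hx
      rw [mem_dplus] at *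
      rcases hx with h | h
      · right; have := dstar_neg I x h; convert this using 1; ring
      · left; have := dstar_neg I _ h; convert this using 1; ring
    · intro x _; ring
  rw [Finset.sum_const, nsmul_one, ZMod.natCast_eq_zero_iff] at this
  exact even_iff_two_dvd.2 this

lemma card_shift {L : ℕ} [NeZero L] (D : Finset (ZMod L)) (h0 : (0 : ZMod L) ∉ D)
    (hne : D.Nonempty) : D.card + 1 ≤ (D ∪ D.image (· + 1)).card := by
  by_contra hlt
  have hsub : D ⊆ D ∪ D.image (· + 1) := subset_union_left
  have heq := Finset.eq_of_subset_of_card_le hsub (by omega)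
  have hcl : ∀ x ∈ D, x + 1 ∈ D := by
    intro x hx
    rw [heq]
    exact mem_union_right _ (mem_image_of_mem _ hx)
  obtain ⟨x, hx⟩ := hne
  have hall : ∀ n : ℕ, x + n ∈ D := by
    intro n
    induction n with
    | zero => simpa using hx
    | succ k ih => have := hcl _ ih; push_cast; rwa [← add_assoc]
  apply h0
  have := hall (-x).val
  simpa using this

lemma card_shift_disj {L : ℕ} (D : Finset (ZMod L)) (h : ∀ x ∈ D, x + 1 ∉ D) :
    (D ∪ D.image (· + 1)).card = 2 * D.card := by
  rw [card_union_of_disjoint, card_image_of_injective _ (add_left_injective 1)]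
  · ring
  · rw [Finset.disjoint_left]
    intro x hx hx'
    obtain ⟨y, hy, rfl⟩ := mem_image.1 hx'
    exact h y hy hx

lemma dstar_eq {L : ℕ} (x y z : ZMod L) (h1 : x ≠ y) (h2 : x ≠ z) (h3 : y ≠ z) :
    dstar {x, y, z} = {x - y, -(x - y), y - z, -(y - z), (x - y) + (y - z),
      -((x - y) + (y - z))} := by
  ext w
  rw [mem_dstar]
  simp only [mem_insert, mem_singleton, exists_eq_or_imp, exists_eq_left, sub_self]
  have a1 := sub_ne_zero.2 h1
  have a2 := sub_ne_zero.2 h2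
  have a3 := sub_ne_zero.2 h3
  have b1 := sub_ne_zero.2 h1.symm
  have b2 := sub_ne_zero.2 h2.symm
  have b3 := sub_ne_zero.2 h3.symm
  simp only [neg_sub, sub_add_sub_cancel]
  constructor
  · grind
  · rintro (rfl | rfl | rfl | rfl | rfl | rfl) <;> simp [*]

/-- equidifferent case -/
lemma caseA {L : ℕ} [NeZero L] (h2 : ∀ x : ZMod L, x + x ≠ 1)
    (h3 : ∀ x : ZMod L, 3 * x ≠ 1) (h4 : ∀ x : ZMod L, 4 * x = 0 → 2 * x = 0)
    (I : Finset (ZMod L)) (a : ZMod L) (hI : dstar I = {a, -a, 2 * a, -(2 * a)})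
    (h1 : 1 ∉ dstar I) (h1' : -1 ∉ dstar I) (ha : 2 * a ≠ 0) :
    8 ≤ (dplus I).card ∨ (4 ≤ (dplus I).card ∧ ∃ w ∈ dstar I, 3 * w = 0 ∧ w ≠ 0) := by
  have e1 := h2 a
  have e2 := h2 (-a)
  have e3 := h2 (2 * a)
  have e4 := h2 (-(2 * a))
  have e5 := h3 a
  have e6 := h3 (-a)
  by_cases h : 3 * a = 0
  · right
    have hD : dstar I = {a, -a} := by
      rw [hI]; ext w; simp only [mem_insert, mem_singleton]; grind
    constructor
    · rw [dplus, card_shift_disj, hD, card_pair]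
      · grind
      · have h10 : (1 : ZMod L) ≠ 0 := by
          intro h; exact h2 0 (by rw [h]; ring)
        rw [hD]; simp only [mem_insert, mem_singleton]
        rintro x (rfl | rfl) (h | h)
        · exact h10 (by linear_combination h)
        · exact e2 (by linear_combination -h)
        · exact e1 (by linear_combination -h)
        · exact h10 (by linear_combination h)
    · refine ⟨a, ?_, h, ?_⟩
      · rw [hD]; simp
      · grind
  · left
    have := h4 a
    rw [dplus, card_shift_disj]
    · have : #(dstar I) = 4 := by
        rw [hI]; repeat rw [card_insert_of_notMem]
        · simp
        all_goals simp only [mem_insert, mem_singleton]; grind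
      omega
    · rw [hI] at *; simp only [mem_insert, mem_singleton] at *; grind

lemma dplus_ge {L : ℕ} [NeZero L] (h2 : ∀ x : ZMod L, x + x ≠ 1)
    (h3 : ∀ x : ZMod L, 3 * x ≠ 1) (h4 : ∀ x : ZMod L, 4 * x = 0 → 2 * x = 0)
    (hh : ∀ x y : ZMod L, 2 * x = 0 → 2 * y = 0 → x ≠ 0 → y ≠ 0 → x = y)
    (I : Finset (ZMod L)) (hc : I.card = 3)
    (h1 : 1 ∉ dstar I) (h1' : -1 ∉ dstar I) :
    8 ≤ (dplus I).card ∨ (4 ≤ (dplus I).card ∧ ∃ w ∈ dstar I, 3 * w = 0 ∧ w ≠ 0) := by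
  obtain ⟨x, y, z, hxy, hxz, hyz, rfl⟩ := card_eq_three.1 hc
  have hD := dstar_eq x y z hxy hxz hyz
  have hev := dplus_even h2 {x, y, z}
  have key0 : (0 : ZMod L) ∉ dstar {x, y, z} := by rw [mem_dstar]; simp
  have ha := sub_ne_zero.2 hxy
  have hb := sub_ne_zero.2 hyz
  have hab : (x - y) + (y - z) ≠ 0 := by
    have := sub_ne_zero.2 hxz
    rwa [sub_add_sub_cancel]
  generalize x - y = a at *
  generalize y - z = b at *
  generalize ({x, y, z} : Finset (ZMod L)) = I at *
  -- isolated half point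
  have caseC : ∀ a b : ZMod L, a ≠ 0 → b ≠ 0 → a + b ≠ 0 → 2 * a = 0 →
      dstar I = {a, b, -b, a + b, -(a + b)} → 8 ≤ (dplus I).card := by
    intro a b ha hb hab h2a hD
    have i1 := hh a b h2a
    have i2 := hh a (a + b) h2a
    have i3 := h4 b
    have c4 : #({b, -b, a + b, -(a + b)} : Finset (ZMod L)) = 4 := by
      repeat rw [card_insert_of_notMem]
      · simp
      all_goals simp only [mem_insert, mem_singleton]; grind
    have c5 := card_shift ({b, -b, a + b, -(a + b)} : Finset (ZMod L)) (by
      simp only [mem_insert, mem_singleton]; grind) ⟨b, by simp⟩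
    have hsub : dplus I = {a, a + 1} ∪ (({b, -b, a + b, -(a + b)} : Finset (ZMod L)) ∪
        ({b, -b, a + b, -(a + b)} : Finset (ZMod L)).image (· + 1)) := by
      rw [dplus, hD]; ext w; simp; grind
    have hdis : Disjoint {a, a + 1} (({b, -b, a + b, -(a + b)} : Finset (ZMod L)) ∪
        ({b, -b, a + b, -(a + b)} : Finset (ZMod L)).image (· + 1)) := by
      rw [hD] at h1 h1'
      simp only [mem_insert, mem_singleton] at h1 h1'
      rw [Finset.disjoint_left]
      simp only [mem_insert, mem_singleton, mem_union, mem_image]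
      grind
    have c6 := card_union_of_disjoint hdis
    rw [← hsub, card_pair (by intro h; have : (1 : ZMod L) = 0 := by grind
                              exact h2 0 (by rw [this]; ring))] at c6
    obtain ⟨k, hk⟩ := hev
    omega
  by_cases a1 : 2 * a = 0
  · left
    refine caseC a b ha hb hab a1 ?_
    rw [hD]; ext w; simp only [mem_insert, mem_singleton]; grind
  by_cases a2 : 2 * b = 0
  · left
    refine caseC b a hb ha (by rwa [add_comm]) a2 ?_
    rw [hD]; ext w; simp only [mem_insert, mem_singleton]; grind
  by_cases a3 : 2 * (a + b) = 0
  · left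
    refine caseC (a + b) (-a) hab (neg_ne_zero.2 ha) (by simpa using hb) a3 ?_
    rw [hD]; ext w; simp only [mem_insert, mem_singleton]; grind
  by_cases b1 : a = b
  · refine caseA h2 h3 h4 I a ?_ h1 h1' a1
    rw [hD]; ext w; simp only [mem_insert, mem_singleton]; grind
  by_cases b2 : a = -(a + b)
  · refine caseA h2 h3 h4 I a ?_ h1 h1' a1
    rw [hD]; ext w; simp only [mem_insert, mem_singleton]; grind
  by_cases b3 : b = -(a + b)
  · refine caseA h2 h3 h4 I b ?_ h1 h1' a2
    rw [hD]; ext w; simp only [mem_insert, mem_singleton]; grind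
  left
  have c6 : #(dstar I) = 6 := by
    rw [hD]; repeat rw [card_insert_of_notMem]
    · simp
    all_goals simp only [mem_insert, mem_singleton]; grind
  have := card_shift (dstar I) key0 (card_pos.1 (by omega))
  rw [← dplus] at this
  obtain ⟨k, hk⟩ := hev
  omega

lemma upper {L : ℕ} [NeZero L] (h2 : ∀ x : ZMod L, x + x ≠ 1)
    (h3 : ∀ x : ZMod L, 3 * x ≠ 1) (h4 : ∀ x : ZMod L, 4 * x = 0 → 2 * x = 0)
    (hh : ∀ x y : ZMod L, 2 * x = 0 → 2 * y = 0 → x ≠ 0 → y ≠ 0 → x = y)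
    (hw : ∀ x y : ZMod L, 3 * x = 0 → 3 * y = 0 → x ≠ 0 → y ≠ 0 → x = y ∨ x = -y)
    (C : Finset (Finset (ZMod L))) (hC : IsSCAC L 3 C) : 8 * #C ≤ L + 2 := by
  obtain ⟨hc1, hc2, hc3⟩ := hC
  have h10 : (1 : ZMod L) ≠ 0 := by
    intro h; exact h2 0 (by rw [h]; ring)
  have htot : ∑ I ∈ C, #(dplus I) + 2 ≤ L := by
    rw [← card_biUnion (fun I hI J hJ h => hc3 I hI J hJ h)]
    have hd : Disjoint (C.biUnion dplus) ({0, 1} : Finset (ZMod L)) := by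
      rw [Finset.disjoint_left]
      intro w hw hw'
      obtain ⟨I, hI, hwI⟩ := mem_biUnion.1 hw
      have key0 : (0 : ZMod L) ∉ dstar I := by rw [mem_dstar]; simp
      have hq := hc2 I hI
      rw [mem_dplus] at hwI
      simp only [mem_insert, mem_singleton] at hw'
      rcases hw' with rfl | rfl
      · rcases hwI with h | h
        · exact key0 h
        · rw [zero_sub] at h; exact hq.2 h
      · rcases hwI with h | h
        · exact hq.1 h
        · rw [sub_self] at h; exact key0 h
    have := card_union_of_disjoint hd
    rw [card_pair h10.symm] at this
    rw [← this]
    refine (card_le_univ _).trans ?_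
    rw [ZMod.card]
  by_cases hex : ∃ I ∈ C, ¬ 8 ≤ #(dplus I)
  · obtain ⟨I, hI, hIc⟩ := hex
    rcases dplus_ge h2 h3 h4 hh I (hc1 I hI) (hc2 I hI).1 (hc2 I hI).2 with h | ⟨hI4, w, hwI, hw3, hw0⟩
    · exact absurd h hIc
    have hrest : ∀ J ∈ C.erase I, 8 ≤ #(dplus J) := by
      intro J hJ
      have hJC := mem_of_mem_erase hJ
      have hne := ne_of_mem_erase hJ
      rcases dplus_ge h2 h3 h4 hh J (hc1 J hJC) (hc2 J hJC).1 (hc2 J hJC).2 with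
        h | ⟨hJ4, w', hwJ, hw3', hw0'⟩
      · exact h
      exfalso
      have hd := Finset.disjoint_left.1 (hc3 I hI J hJC hne.symm)
      rcases hw w w' hw3 hw3' hw0 hw0' with rfl | rfl
      · exact hd (mem_union_left _ hwI) (mem_union_left _ hwJ)
      · exact hd (mem_union_left _ hwI) (mem_union_left _ (dstar_neg _ _ hwJ))
    have := card_nsmul_le_sum _ _ _ hrest
    rw [← add_sum_erase _ _ hI] at htot
    rw [card_erase_of_mem hI, smul_eq_mul] at this
    omega
  · push Not at hex
    have := card_nsmul_le_sum _ _ _ hex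
    rw [smul_eq_mul] at this
    omega

def Ev {L : ℕ} (x : ZMod L) : Prop := ∃ y, x = 2 * y

def Orb {L : ℕ} (x : ZMod L) : Set (ZMod L) := {y | ∃ n : ℕ, y = 2 ^ n * x ∨ y = -(2 ^ n * x)}

noncomputable def rep {L : ℕ} (x : ZMod L) : ZMod L :=
  Classical.epsilon (fun y => y ∈ Orb x)

lemma rep_mem {L : ℕ} (x : ZMod L) : rep x ∈ Orb x :=
  Classical.epsilon_spec (p := fun y => y ∈ Orb x) ⟨x, 0, by simp⟩

lemma Orb_neg {L : ℕ} (x : ZMod L) : Orb (-x) = Orb x := by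
  ext y
  constructor
  · rintro ⟨n, h | h⟩
    · exact ⟨n, Or.inr (by rw [h]; ring)⟩
    · exact ⟨n, Or.inl (by rw [h]; ring)⟩
  · rintro ⟨n, h | h⟩
    · exact ⟨n, Or.inr (by rw [h]; ring)⟩
    · exact ⟨n, Or.inl (by rw [h]; ring)⟩

lemma rep_neg {L : ℕ} (x : ZMod L) : rep (-x) = rep x := by
  unfold rep; rw [Orb_neg]

lemma Ev.pow {L m : ℕ} (hm : (2 : ZMod L) ^ m * 2 = 2) {x : ZMod L} (hx : Ev x) :
    2 ^ m * x = x := by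
  obtain ⟨y, rfl⟩ := hx
  rw [← mul_assoc, hm]

lemma Ev.powmul {L m : ℕ} (hm : (2 : ZMod L) ^ m * 2 = 2) {x : ZMod L} (hx : Ev x) (n : ℕ) :
    2 ^ (m * n) * x = x := by
  induction n with
  | zero => simp
  | succ k ih => rw [mul_add, mul_one, pow_add, mul_assoc, hx.pow hm, ih]

lemma Ev.neg {L : ℕ} {x : ZMod L} (hx : Ev x) : Ev (-x) := by
  obtain ⟨y, rfl⟩ := hx
  exact ⟨-y, by ring⟩

lemma Ev.mul {L : ℕ} {x : ZMod L} (hx : Ev x) (c : ZMod L) : Ev (c * x) := by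
  obtain ⟨y, rfl⟩ := hx
  exact ⟨c * y, by ring⟩

/-- undo a power of two -/
lemma Ev.undo {L m : ℕ} (hm0 : 1 ≤ m) (hm : (2 : ZMod L) ^ m * 2 = 2) {x : ZMod L} (hx : Ev x)
    (n : ℕ) : 2 ^ ((m - 1) * n) * (2 ^ n * x) = x := by
  rw [← mul_assoc, ← pow_add, ← hx.powmul hm n]
  obtain ⟨k, rfl⟩ : ∃ k, m = k + 1 := ⟨m - 1, by omega⟩
  simp only [Nat.add_sub_cancel]
  rw [← mul_assoc, ← pow_add, show k * n + n + (k + 1) * n = (k + 1) * n + (k + 1) * n by ring,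
    pow_add, mul_assoc, hx.powmul hm n, hx.powmul hm n]

lemma Ev.cancel {L m : ℕ} (hm0 : 1 ≤ m) (hm : (2 : ZMod L) ^ m * 2 = 2) {x : ZMod L} (hx : Ev x)
    (h : 2 * x = 0) : x = 0 := by
  have := hx.undo hm0 hm 1
  rw [pow_one, h, mul_zero] at this
  exact this.symm

lemma Orb_two {L m : ℕ} (hm0 : 1 ≤ m) (hm : (2 : ZMod L) ^ m * 2 = 2) {x : ZMod L} (hx : Ev x) :
    Orb (2 * x) = Orb x := by
  have hu := hx.undo hm0 hm 1
  rw [pow_one, mul_one] at hu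
  ext y
  constructor
  · rintro ⟨n, h | h⟩
    · exact ⟨n + 1, Or.inl (by rw [h]; ring)⟩
    · exact ⟨n + 1, Or.inr (by rw [h]; ring)⟩
  · rintro ⟨n, h | h⟩
    · exact ⟨n + (m - 1), Or.inl (by rw [pow_add, mul_assoc, hu, h])⟩
    · exact ⟨n + (m - 1), Or.inr (by rw [pow_add, mul_assoc, hu, h])⟩

lemma rep_two {L m : ℕ} (hm0 : 1 ≤ m) (hm : (2 : ZMod L) ^ m * 2 = 2) {x : ZMod L} (hx : Ev x) :
    rep (2 * x) = rep x := by
  unfold rep; rw [Orb_two hm0 hm hx]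

lemma rep_ev {L : ℕ} {x : ZMod L} (hx : Ev x) : Ev (rep x) := by
  obtain ⟨n, h | h⟩ := rep_mem x
  · rw [h]; exact hx.mul _
  · rw [h]; exact (hx.mul _).neg

lemma eq_rep {L m : ℕ} (hm0 : 1 ≤ m) (hm : (2 : ZMod L) ^ m * 2 = 2) {x : ZMod L} (hx : Ev x) :
    ∃ n : ℕ, x = 2 ^ n * rep x ∨ x = -(2 ^ n * rep x) := by
  obtain ⟨n, h | h⟩ := rep_mem x
  · exact ⟨(m - 1) * n, Or.inl (by rw [h, hx.undo hm0 hm])⟩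
  · exact ⟨(m - 1) * n, Or.inr (by rw [h, mul_neg, hx.undo hm0 hm, neg_neg])⟩

lemma odd_key {L t j : ℕ} (ht : 1 ≤ t) (hm : (2 : ZMod L) ^ (2 ^ t) * 2 = 2) {r : ZMod L}
    (hr : Ev r) (hj : Odd j) (h : 2 ^ j * r = r ∨ 2 ^ j * r = -r) : 3 * r = 0 := by
  have h2j : (2 : ZMod L) ^ (2 * j) * r = r := by
    rw [two_mul, pow_add, mul_assoc]
    rcases h with h | h
    · rw [h, h]
    · rw [h, mul_neg, h, neg_neg]
  have p1 : Function.IsPeriodicPt (fun x : ZMod L => 2 * x) (2 * j) r := by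
    rw [Function.IsPeriodicPt, Function.IsFixedPt, mul_left_iterate]; exact h2j
  have p2 : Function.IsPeriodicPt (fun x : ZMod L => 2 * x) (2 ^ t) r := by
    rw [Function.IsPeriodicPt, Function.IsFixedPt, mul_left_iterate]; exact hr.pow hm
  have hg : Nat.gcd (2 * j) (2 ^ t) = 2 := by
    obtain ⟨s, rfl⟩ : ∃ s, t = s + 1 := ⟨t - 1, by omega⟩
    rw [pow_succ, mul_comm _ 2, Nat.gcd_mul_left,
      Nat.Coprime.pow_right _ (Nat.coprime_two_right.2 hj)]
  have p := p1.gcd p2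
  rw [hg, Function.IsPeriodicPt, Function.IsFixedPt, mul_left_iterate] at p
  simp only at p
  linear_combination p

def InT {L : ℕ} (x : ZMod L) : Prop :=
  x ≠ 0 ∧ Ev x ∧ (3 * x = 0 ∨ ∃ n : ℕ, x = 4 ^ n * rep x ∨ x = -(4 ^ n * rep x))

lemma T_sep {L t : ℕ} (ht : 1 ≤ t) (hm : (2 : ZMod L) ^ (2 ^ t) * 2 = 2) {a b : ZMod L}
    (ha : InT a) (hb : InT b) (h : a = 2 * b ∨ a = -(2 * b)) : a = b ∨ a = -b := by
  have hm0 : 1 ≤ 2 ^ t := Nat.one_le_two_pow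
  by_cases h3 : 3 * b = 0
  · rcases h with h | h
    · right; linear_combination h + h3
    · left; linear_combination h - h3
  exfalso
  obtain ⟨ha0, hae, ha⟩ := ha
  obtain ⟨hb0, hbe, hb⟩ := hb
  have h3a : 3 * a ≠ 0 := by
    intro h0
    refine h3 ((hbe.mul 3).cancel hm0 hm ?_)
    rcases h with h | h
    · linear_combination h0 - 3 * h
    · linear_combination -h0 + 3 * h
  have hrep : rep a = rep b := by
    rcases h with h | h
    · rw [h, rep_two hm0 hm hbe]
    · rw [h, rep_neg, rep_two hm0 hm hbe]
  obtain ⟨k, ha⟩ := ha.resolve_left h3a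
  obtain ⟨l, hb⟩ := hb.resolve_left h3
  rw [hrep] at ha
  have hre := rep_ev hbe
  set r := rep b with hr
  have hu := hre.undo hm0 hm (2 * k)
  have e4 : ∀ n : ℕ, (4 : ZMod L) ^ n = 2 ^ (2 * n) := by
    intro n; rw [pow_mul]; norm_num
  rw [e4] at ha hb
  have hrr : (2 : ZMod L) ^ (2 * k) * r = 2 * (2 ^ (2 * l) * r) ∨
      (2 : ZMod L) ^ (2 * k) * r = -(2 * (2 ^ (2 * l) * r)) := by
    rcases h with h | h <;> rcases ha with ha | ha <;> rcases hb with hb | hb <;>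
      [left; right; right; left; right; left; left; right] <;> grind
  have h3r : 3 * r = 0 := by
    refine odd_key ht hm hre (j := (2 ^ t - 1) * (2 * k) + 2 * l + 1)
      ⟨(2 ^ t - 1) * k + l, by ring⟩ ?_
    rw [pow_succ, pow_add]
    rcases hrr with hrr | hrr
    · left; rw [hrr] at hu; linear_combination hu
    · right; rw [hrr] at hu; linear_combination -hu
  apply h3
  rcases hb with hb | hb
  · rw [hb]; linear_combination 2 ^ (2 * l) * h3r
  · rw [hb]; linear_combination -2 ^ (2 * l) * h3r

lemma T_cover {L t : ℕ} (hm : (2 : ZMod L) ^ (2 ^ t) * 2 = 2) {x : ZMod L}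
    (hx : Ev x) (hx0 : x ≠ 0) : InT x ∨ ∃ u, InT u ∧ x = 2 * u := by
  have hm0 : 1 ≤ 2 ^ t := Nat.one_le_two_pow
  have e4 : ∀ n : ℕ, (4 : ZMod L) ^ n = 2 ^ (2 * n) := by
    intro n; rw [pow_mul]; norm_num
  obtain ⟨n, h⟩ := eq_rep hm0 hm hx
  have hre := rep_ev hx
  rcases Nat.even_or_odd' n with ⟨k, rfl | rfl⟩
  · left
    exact ⟨hx0, hx, Or.inr ⟨k, by rw [e4]; exact h⟩⟩
  · right
    rcases h with h | h
    · have hxu : x = 2 * (4 ^ k * rep x) := by rw [e4]; nth_rewrite 1 [h]; ring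
      have hue := hre.mul (4 ^ k)
      refine ⟨4 ^ k * rep x, ⟨?_, hue, Or.inr ⟨k, Or.inl ?_⟩⟩, hxu⟩
      · intro h0; apply hx0; rw [hxu, h0, mul_zero]
      · rw [← rep_two hm0 hm hue, ← hxu]
    · have hxu : x = 2 * (-(4 ^ k * rep x)) := by rw [e4]; nth_rewrite 1 [h]; ring
      have hue := (hre.mul (4 ^ k)).neg
      refine ⟨-(4 ^ k * rep x), ⟨?_, hue, Or.inr ⟨k, Or.inr ?_⟩⟩, hxu⟩
      · intro h0; apply hx0; rw [hxu, h0, mul_zero]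
      · rw [← rep_two hm0 hm hue, ← hxu]

open Classical in
lemma T_card {L t : ℕ} [NeZero L] (hm : (2 : ZMod L) ^ (2 ^ t) * 2 = 2)
    (hw : ∃ w : ZMod L, Ev w ∧ 3 * w = 0 ∧ w ≠ 0) :
    L + 2 ≤ 4 * #(univ.filter (fun x : ZMod L => InT x)) := by
  have hm0 : 1 ≤ 2 ^ t := Nat.one_le_two_pow
  set T := univ.filter (fun x : ZMod L => InT x) with hT
  set E := univ.filter (fun x : ZMod L => Ev x) with hE
  have hLE : L ≤ 2 * #E := by
    have hsub : (univ : Finset (ZMod L)) ⊆ E ∪ E.image (· + 1) := by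
      intro x _
      rw [mem_union, mem_image]
      rcases Nat.even_or_odd' x.val with ⟨k, hk | hk⟩
      · left; rw [hE, mem_filter]; refine ⟨mem_univ _, k, ?_⟩
        rw [← ZMod.natCast_zmod_val x, hk]; push_cast; ring
      · right; refine ⟨2 * k, ?_, ?_⟩
        · rw [hE, mem_filter]; exact ⟨mem_univ _, k, rfl⟩
        · rw [← ZMod.natCast_zmod_val x, hk]; push_cast; ring
    have h1 := card_le_card hsub
    have h2 := card_union_le E (E.image (· + 1))
    have h3 := card_image_le (s := E) (f := (· + 1))
    rw [card_univ, ZMod.card] at h1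
    omega
  have hE0 : (0 : ZMod L) ∈ E := by
    rw [hE, mem_filter]; exact ⟨mem_univ _, 0, by ring⟩
  have hcov : E.erase 0 ⊆ T ∪ T.image (2 * ·) := by
    intro x hx
    rw [mem_erase, hE, mem_filter] at hx
    rw [mem_union, mem_image]
    rcases T_cover hm hx.2.2 hx.1 with h | ⟨u, hu, h⟩
    · left; rw [hT, mem_filter]; exact ⟨mem_univ _, h⟩
    · right; exact ⟨u, by rw [hT, mem_filter]; exact ⟨mem_univ _, hu⟩, h.symm⟩
  obtain ⟨w, hwe, hw3, hw0⟩ := hw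
  have hww : w ≠ -w := by
    intro h
    exact hw0 (hwe.cancel hm0 hm (by linear_combination h))
  have hwT : w ∈ T := by
    rw [hT, mem_filter]; exact ⟨mem_univ _, hw0, hwe, Or.inl hw3⟩
  have hwT' : -w ∈ T := by
    rw [hT, mem_filter]
    exact ⟨mem_univ _, neg_ne_zero.2 hw0, hwe.neg, Or.inl (by linear_combination -hw3)⟩
  have hint : ({w, -w} : Finset (ZMod L)) ⊆ T ∩ T.image (2 * ·) := by
    intro x hx
    rw [mem_insert, mem_singleton] at hx
    rw [mem_inter, mem_image]
    rcases hx with rfl | rfl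
    · exact ⟨hwT, -x, hwT', by linear_combination -hw3⟩
    · exact ⟨hwT', w, hwT, by linear_combination hw3⟩
  have h1 := card_le_card hcov
  have h2 := card_le_card hint
  have h3 := card_union_add_card_inter T (T.image (2 * ·))
  have h4 := card_image_le (s := T) (f := (2 * ·))
  rw [card_pair hww] at h2
  rw [card_erase_of_mem hE0] at h1
  omega

lemma dstar_sym {L : ℕ} (a : ZMod L) (x : ZMod L) (h : x ∈ dstar {-a, 0, a}) :
    x = a ∨ x = -a ∨ x = 2 * a ∨ x = -(2 * a) := by
  rw [mem_dstar] at h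
  obtain ⟨h0, u, hu, v, hv, rfl⟩ := h
  simp only [mem_insert, mem_singleton] at hu hv
  rcases hu with rfl | rfl | rfl <;> rcases hv with rfl | rfl | rfl <;> grind

open Classical in
lemma lower {L t : ℕ} [NeZero L] (ht : 1 ≤ t) (h2 : ∀ x : ZMod L, x + x ≠ 1)
    (hm : (2 : ZMod L) ^ (2 ^ t) * 2 = 2)
    (hw : ∃ w : ZMod L, Ev w ∧ 3 * w = 0 ∧ w ≠ 0) :
    ∃ C, IsSCAC L 3 C ∧ L + 2 ≤ 8 * #C := by
  have hm0 : 1 ≤ 2 ^ t := Nat.one_le_two_pow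
  have hcard := T_card hm hw
  set T := univ.filter (fun x : ZMod L => InT x) with hT
  have hTm : ∀ x, x ∈ T ↔ InT x := by intro x; rw [hT, mem_filter]; simp
  have hev1 : ¬ Ev (1 : ZMod L) := by
    rintro ⟨y, hy⟩; exact h2 y (by rw [hy]; ring)
  have hds : ∀ a x : ZMod L, Ev a → x ∈ dstar {-a, 0, a} → Ev x := by
    intro a x ha hx
    rcases dstar_sym a x hx with rfl | rfl | rfl | rfl
    · exact ha
    · exact ha.neg
    · exact ha.mul 2
    · exact (ha.mul 2).neg
  have hsym : ∀ a b : ZMod L, (a = b ∨ a = -b) → ({-a, 0, a} : Finset (ZMod L)) = {-b, 0, b} := by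
    rintro a b (rfl | rfl)
    · rfl
    · ext w; simp only [mem_insert, mem_singleton]; grind
  have hsep : ∀ a b x : ZMod L, InT a → InT b → x ∈ dstar {-a, 0, a} → x ∈ dstar {-b, 0, b} →
      a = b ∨ a = -b := by
    intro a b x ha hb hxa hxb
    have c1 := T_sep ht hm ha hb
    have c2 := T_sep ht hm hb ha
    have c3 : 2 * (a - b) = 0 → a - b = 0 := by
      obtain ⟨y, hy⟩ := ha.2.1
      obtain ⟨z, hz⟩ := hb.2.1
      exact Ev.cancel hm0 hm ⟨y - z, by rw [hy, hz]; ring⟩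
    have c4 : 2 * (a + b) = 0 → a + b = 0 := by
      obtain ⟨y, hy⟩ := ha.2.1
      obtain ⟨z, hz⟩ := hb.2.1
      exact Ev.cancel hm0 hm ⟨y + z, by rw [hy, hz]; ring⟩
    have d1 := dstar_sym a x hxa
    have d2 := dstar_sym b x hxb
    clear hxa hxb hds hsym hw hm h2 ha hb hTm hT hcard
    grind
  refine ⟨T.image (fun a => {-a, 0, a}), ⟨?_, ?_, ?_⟩, ?_⟩
  · intro I hI
    obtain ⟨a, ha, rfl⟩ := mem_image.1 hI
    obtain ⟨ha0, hae, -⟩ := (hTm a).1 ha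
    rw [card_eq_three]
    refine ⟨-a, 0, a, neg_ne_zero.2 ha0, ?_, ha0.symm, rfl⟩
    intro h
    exact ha0 (hae.cancel hm0 hm (by linear_combination -h))
  · intro I hI
    obtain ⟨a, ha, rfl⟩ := mem_image.1 hI
    obtain ⟨ha0, hae, -⟩ := (hTm a).1 ha
    refine ⟨fun h => hev1 (hds a _ hae h), fun h => hev1 ?_⟩
    have := (hds a _ hae h).neg
    rwa [neg_neg] at this
  · intro I hI J hJ hIJ
    obtain ⟨a, ha, rfl⟩ := mem_image.1 hI
    obtain ⟨b, hb, rfl⟩ := mem_image.1 hJ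
    have ha := (hTm a).1 ha
    have hb := (hTm b).1 hb
    have hpar : ∀ x : ZMod L, Ev x → Ev (x - 1) → False := by
      rintro x ⟨y, hy⟩ ⟨z, hz⟩
      exact hev1 ⟨y - z, by linear_combination hy - hz⟩
    rw [Finset.disjoint_left]
    intro x hxa hxb
    rw [mem_dplus] at hxa hxb
    apply hIJ
    apply hsym
    rcases hxa with hxa | hxa <;> rcases hxb with hxb | hxb
    · exact hsep a b x ha hb hxa hxb
    · exact (hpar x (hds a _ ha.2.1 hxa) (hds b _ hb.2.1 hxb)).elim
    · exact (hpar x (hds b _ hb.2.1 hxb) (hds a _ ha.2.1 hxa)).elim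
    · exact hsep a b (x - 1) ha hb hxa hxb
  · have := card_le_mul_card_image (f := fun a : ZMod L => ({-a, 0, a} : Finset (ZMod L))) T 2 (by
      intro I hI
      obtain ⟨a, ha, rfl⟩ := mem_image.1 hI
      have ha0 := ((hTm a).1 ha).1
      refine (card_le_card (t := {a, -a}) ?_).trans card_le_two
      intro b hb
      rw [mem_filter] at hb
      have hb0 := ((hTm b).1 hb.1).1
      have hbm : b ∈ ({-a, 0, a} : Finset (ZMod L)) := by rw [← hb.2]; simp
      simp only [mem_insert, mem_singleton] at hbm ⊢
      tauto)
    omega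

theorem MS_eq_fermat_like (t L : ℕ) (ht : 2 ≤ t) (hL : L = 2 ^ (2 ^ t + 1) - 2) :
    MS L 3 = (L + 2) / 8 := by
  obtain ⟨q, hq⟩ : ∃ q : ℕ, 2 ^ (2 ^ t) = 48 * q + 16 := by
    obtain ⟨s, rfl⟩ : ∃ s, t = s + 2 := ⟨t - 2, by omega⟩
    have h1 : (2 : ℕ) ^ (2 ^ (s + 2)) = 16 ^ (2 ^ s) := by
      rw [pow_add, mul_comm, pow_mul]; norm_num
    rw [h1]
    have : ∀ n : ℕ, 1 ≤ n → ∃ q, 16 ^ n = 48 * q + 16 := by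
      intro n hn
      induction n, hn using Nat.le_induction with
      | base => exact ⟨0, by norm_num⟩
      | succ n _ ih => obtain ⟨q, hq⟩ := ih; exact ⟨16 * q + 5, by rw [pow_succ, hq]; ring⟩
    exact this _ Nat.one_le_two_pow
  have hLq : L = 96 * q + 30 := by rw [hL, pow_succ, hq]; omega
  have hLne : NeZero L := ⟨by omega⟩
  have hm : (2 : ZMod L) ^ (2 ^ t) * 2 = 2 := by
    have h : ((2 ^ (2 ^ t) * 2 : ℕ) : ZMod L) = ((L + 2 : ℕ) : ZMod L) := by
      congr 1; rw [hq]; omega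
    push_cast at h
    rw [h]; simp
  have h2 : ∀ x : ZMod L, x + x ≠ 1 := by
    intro x hx
    have := congrArg (ZMod.castHom (show 2 ∣ L by omega) (ZMod 2)) hx
    rw [map_add, map_one] at this
    generalize ZMod.castHom (show 2 ∣ L by omega) (ZMod 2) x = y at this
    revert y; decide
  have h3 : ∀ x : ZMod L, 3 * x ≠ 1 := by
    intro x hx
    have := congrArg (ZMod.castHom (show 3 ∣ L by omega) (ZMod 3)) hx
    rw [map_mul, map_one, map_ofNat] at this
    generalize ZMod.castHom (show 3 ∣ L by omega) (ZMod 3) x = y at this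
    revert y; decide
  have h4 : ∀ x : ZMod L, 4 * x = 0 → 2 * x = 0 := by
    intro x hx
    exact Ev.cancel Nat.one_le_two_pow hm ⟨x, rfl⟩ (by linear_combination hx)
  have hval : ∀ (k : ℕ) (x : ZMod L), (k : ZMod L) * x = 0 → L ∣ k * x.val := by
    intro k x h
    rw [← ZMod.natCast_eq_zero_iff]; push_cast; rw [ZMod.natCast_zmod_val]; exact h
  have hv0 : ∀ x : ZMod L, x ≠ 0 → 0 < x.val := by
    intro x hx
    exact Nat.pos_of_ne_zero (by rwa [Ne, ZMod.val_eq_zero])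
  have hh : ∀ x y : ZMod L, 2 * x = 0 → 2 * y = 0 → x ≠ 0 → y ≠ 0 → x = y := by
    intro x y hx hy hx0 hy0
    obtain ⟨a, ha⟩ := hval 2 x (by exact_mod_cast hx)
    obtain ⟨b, hb⟩ := hval 2 y (by exact_mod_cast hy)
    have := hv0 x hx0
    have := hv0 y hy0
    have := x.val_lt
    have := y.val_lt
    have a1 : a = 1 := by
      have : a < 2 := by by_contra h; nlinarith
      have : a ≠ 0 := by rintro rfl; omega
      omega
    have b1 : b = 1 := by
      have : b < 2 := by by_contra h; nlinarith
      have : b ≠ 0 := by rintro rfl; omega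
      omega
    subst a1 b1
    exact ZMod.val_injective L (by omega)
  have hw : ∀ x y : ZMod L, 3 * x = 0 → 3 * y = 0 → x ≠ 0 → y ≠ 0 → x = y ∨ x = -y := by
    intro x y hx hy hx0 hy0
    obtain ⟨a, ha⟩ := hval 3 x (by exact_mod_cast hx)
    obtain ⟨b, hb⟩ := hval 3 y (by exact_mod_cast hy)
    have := hv0 x hx0
    have := hv0 y hy0
    have := x.val_lt
    have := y.val_lt
    have a1 : a = 1 ∨ a = 2 := by
      have : a < 3 := by by_contra h; nlinarith
      have : a ≠ 0 := by rintro rfl; omega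
      omega
    have b1 : b = 1 ∨ b = 2 := by
      have : b < 3 := by by_contra h; nlinarith
      have : b ≠ 0 := by rintro rfl; omega
      omega
    by_cases hab : a = b
    · left; subst hab
      exact ZMod.val_injective L (by omega)
    · right
      have hs : x.val + y.val = L := by
        rcases a1 with rfl | rfl <;> rcases b1 with rfl | rfl <;> omega
      have h := congrArg (Nat.cast : ℕ → ZMod L) hs
      push_cast at h
      rw [ZMod.natCast_zmod_val, ZMod.natCast_zmod_val, ZMod.natCast_self] at h
      linear_combination h
  have hwex : ∃ w : ZMod L, Ev w ∧ 3 * w = 0 ∧ w ≠ 0 := by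
    refine ⟨((32 * q + 10 : ℕ) : ZMod L), ⟨((16 * q + 5 : ℕ) : ZMod L), ?_⟩, ?_, ?_⟩
    · push_cast; ring
    · have : ((3 * (32 * q + 10) : ℕ) : ZMod L) = 0 := by
        rw [ZMod.natCast_eq_zero_iff]; exact ⟨1, by omega⟩
      rw [← this]; push_cast; ring
    · rw [Ne, ZMod.natCast_eq_zero_iff]
      intro h
      have := Nat.le_of_dvd (by omega) h
      omega
  obtain ⟨C, hC, hCc⟩ := lower (by omega) h2 hm hwex
  have hub : ∀ n ∈ {n | ∃ C : Finset (Finset (ZMod L)), IsSCAC L 3 C ∧ C.card = n},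
      n ≤ (L + 2) / 8 := by
    rintro n ⟨C, hC, rfl⟩
    have := upper h2 h3 h4 hh hw C hC
    omega
  have hmem : (L + 2) / 8 ∈ {n | ∃ C : Finset (Finset (ZMod L)), IsSCAC L 3 C ∧ C.card = n} := by
    refine ⟨C, hC, ?_⟩
    have := hub _ ⟨C, hC, rfl⟩
    omega
  exact le_antisymm (csSup_le ⟨_, hmem⟩ hub) (le_csSup ⟨_, hub⟩ hmem)
end

section
/- Let L > 3 be an odd integer not divisible by 3. Suppose L has a prime factor p̂ such that p̂ is a safe prime with p̂ ≡ 3 (mod 4), p̂² does not divide L, and every prime factor of L other than p̂ is congruent to 5 modulo 8. Then M(L,3) = M^e(L,3) = (L − 3)/4. -/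
open Finset

/-- A conflict-avoiding code of length `L` and weight `ω`. -/
def IsCAC (L ω : ℕ) (C : Finset (Finset (ZMod L))) : Prop :=
  (∀ I ∈ C, I.card = ω) ∧
  ∀ I ∈ C, ∀ J ∈ C, I ≠ J → Disjoint (dstar I) (dstar J)

/-- `M(L,ω)`: the maximum size of a CAC of length `L` and weight `ω`. -/
noncomputable def MCAC (L ω : ℕ) : ℕ :=
  sSup {n | ∃ C : Finset (Finset (ZMod L)), IsCAC L ω C ∧ C.card = n}

/-- An equi-difference codeword of weight three: `I = {0, g, 2g}` for some generator
`1 ≤ g ≤ L/2`. -/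
def IsEquiDiff {L : ℕ} (I : Finset (ZMod L)) : Prop :=
  ∃ g : ℕ, 1 ≤ g ∧ 2 * g ≤ L ∧ I = {0, (g : ZMod L), ((2 * g : ℕ) : ZMod L)}

/-- `M^e(L,ω)`: the maximum size of a CAC of length `L` and weight `ω` all of whose
codewords are equi-difference. -/
noncomputable def MeCAC (L ω : ℕ) : ℕ :=
  sSup {n | ∃ C : Finset (Finset (ZMod L)),
    IsCAC L ω C ∧ (∀ I ∈ C, IsEquiDiff I) ∧ C.card = n}

/-- The leave of a CAC `C` of length `L`: `Λ = ℤ_L \ ⋃_{I ∈ C} d(I)`. -/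
def leave {L : ℕ} (C : Finset (Finset (ZMod L))) : Set (ZMod L) :=
  Set.univ \ ⋃ I ∈ C, (dset I : Set (ZMod L))

noncomputable def colC (L : ℕ) (Y : ℤ) : ℤ :=
  jacobiSym (Y / (Int.gcd Y L : ℤ)) (L / Int.gcd Y L).minFac

lemma colC_mul (L : ℕ) (hL : 0 < L) (a Y Z : ℤ) (ha : IsCoprime a (L : ℤ))
    (h : (L : ℤ) ∣ Z - a * Y) :
    colC L Z = jacobiSym a (L / Int.gcd Y L).minFac * colC L Y := by
  obtain ⟨t, ht⟩ := h
  have hZ : Z = a * Y + L * t := by linarith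
  have hg : Int.gcd Z L = Int.gcd Y L := by
    rw [hZ, Int.gcd_add_mul_left_left]
    rw [Int.isCoprime_iff_gcd_eq_one] at ha
    exact Int.gcd_mul_right_left_of_gcd_eq_one ha
  unfold colC
  rw [hg]
  have hgpos : 0 < Int.gcd Y L := Int.gcd_pos_of_ne_zero_right _ (by exact_mod_cast hL.ne')
  obtain ⟨y, hy⟩ : (Int.gcd Y L : ℤ) ∣ Y := Int.gcd_dvd_left ..
  obtain ⟨l, hl⟩ : Int.gcd Y L ∣ L := by exact_mod_cast (Int.gcd_dvd_right Y L)
  set g := Int.gcd Y L with hgdef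
  have hg0 : (g : ℤ) ≠ 0 := by exact_mod_cast hgpos.ne'
  have e1 : L / g = l := by rw [hl]; exact Nat.mul_div_cancel_left _ hgpos
  have e2 : Y / g = y := by rw [hy]; exact Int.mul_ediv_cancel_left _ hg0
  have e3 : Z / g = a * y + l * t := by
    have : Z = g * (a * y + l * t) := by
      rw [hZ, hy]
      have : (L : ℤ) = g * l := by exact_mod_cast hl
      rw [this]; ring
    rw [this]; exact Int.mul_ediv_cancel_left _ hg0
  rw [e1, e2, e3, ← jacobiSym.mul_left, jacobiSym.mod_left, jacobiSym.mod_left (a * y)]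
  congr 1
  obtain ⟨s, hs⟩ := l.minFac_dvd
  have : (l : ℤ) = l.minFac * s := by exact_mod_cast hs
  conv_lhs => rw [this, mul_assoc, Int.add_mul_emod_self_left]

lemma colC_prime (L phat : ℕ) (hL : 0 < L) (hphat : phat.Prime) (hdvd : phat ∣ L)
    (hsq : ¬ phat ^ 2 ∣ L)
    (hp : ∀ p : ℕ, p.Prime → p ∣ L → p ≠ phat → p % 8 = 5) (Y : ℤ) (hY : (phat : ℤ) ∣ Y)
    (hne : ¬ (L : ℤ) ∣ Y) :
    (L / Int.gcd Y L).minFac % 8 = 5 ∧ (colC L Y = 1 ∨ colC L Y = -1) := by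
  have hgpos : 0 < Int.gcd Y L := Int.gcd_pos_of_ne_zero_right _ (by exact_mod_cast hL.ne')
  have hgY : (Int.gcd Y L : ℤ) ∣ Y := Int.gcd_dvd_left ..
  obtain ⟨l, hl⟩ : Int.gcd Y L ∣ L := by exact_mod_cast (Int.gcd_dvd_right Y L)
  have hpg : phat ∣ Int.gcd Y L := Int.dvd_gcd hY (by exact_mod_cast hdvd)
  have hcop : Int.gcd (Y / Int.gcd Y L) ((L : ℤ) / Int.gcd Y L) = 1 :=
    Int.gcd_ediv_gcd_ediv_gcd_of_ne_zero_right (by exact_mod_cast hL.ne')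
  unfold colC
  set g := Int.gcd Y L with hgdef
  have e1 : L / g = l := by rw [hl]; exact Nat.mul_div_cancel_left _ hgpos
  have e1' : (L : ℤ) / g = l := by exact_mod_cast e1
  rw [e1'] at hcop
  rw [e1]
  have hl1 : l ≠ 1 := by
    rintro rfl
    rw [mul_one] at hl
    apply hne; rw [hl]; exact hgY
  have hlp := Nat.minFac_prime hl1
  have hd := l.minFac_dvd
  refine ⟨hp _ hlp (hd.trans ⟨g, by rw [mul_comm]; exact hl⟩) ?_, ?_⟩
  · intro h
    rw [h] at hd
    apply hsq
    rw [hl, pow_two]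
    exact mul_dvd_mul hpg hd
  · apply jacobiSym.eq_one_or_neg_one
    rw [← Nat.dvd_one, ← hcop]
    exact Int.dvd_gcd (Int.gcd_dvd_left ..) ((Int.gcd_dvd_right ..).trans (by exact_mod_cast hd))

lemma colC_two (L phat : ℕ) (hL : 0 < L) (hodd : Odd L) (hphat : phat.Prime) (hdvd : phat ∣ L)
    (hsq : ¬ phat ^ 2 ∣ L)
    (hp : ∀ p : ℕ, p.Prime → p ∣ L → p ≠ phat → p % 8 = 5) (Y Z : ℤ) (hY : (phat : ℤ) ∣ Y)
    (hne : ¬ (L : ℤ) ∣ Y) (h : (L : ℤ) ∣ Z - 2 * Y) : colC L Z = - colC L Y := by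
  have h8 := (colC_prime L phat hL hphat hdvd hsq hp Y hY hne).1
  have hc : IsCoprime (2 : ℤ) (L : ℤ) := by
    exact_mod_cast Nat.isCoprime_iff_coprime.2 (Nat.coprime_two_left.2 hodd)
  rw [colC_mul L hL 2 Y Z hc h, jacobiSym.at_two (Nat.odd_iff.2 (by omega)),
    ZMod.χ₈_nat_eq_if_mod_eight]
  rw [if_neg (by omega), if_neg (by omega)]; ring

lemma colC_neg (L phat : ℕ) (hL : 0 < L) (hphat : phat.Prime) (hdvd : phat ∣ L)
    (hsq : ¬ phat ^ 2 ∣ L)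
    (hp : ∀ p : ℕ, p.Prime → p ∣ L → p ≠ phat → p % 8 = 5) (Y Z : ℤ) (hY : (phat : ℤ) ∣ Y)
    (hne : ¬ (L : ℤ) ∣ Y) (h : (L : ℤ) ∣ Z + Y) : colC L Z = colC L Y := by
  have h8 := (colC_prime L phat hL hphat hdvd hsq hp Y hY hne).1
  rw [colC_mul L hL (-1) Y Z isCoprime_one_left.neg_left (by simpa using h),
    jacobiSym.at_neg_one (Nat.odd_iff.2 (by omega)),
    ZMod.χ₄_nat_one_mod_four (by omega), one_mul]

/-- the half of the A-part -/
lemma exists_A (L phat : ℕ) (hL : 0 < L) (hodd : Odd L) (hphat : phat.Prime) (hdvd : phat ∣ L)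
    (hsq : ¬ phat ^ 2 ∣ L)
    (hp : ∀ p : ℕ, p.Prime → p ∣ L → p ≠ phat → p % 8 = 5) :
    ∃ G : Finset (ZMod L), (∀ x ∈ G, (phat : ZMod L) * x ≠ 0) ∧ (∀ x ∈ G, -x ∈ G) ∧
      (∀ x ∈ G, 2 * x ∉ G) ∧ L ≤ 2 * G.card + phat := by
  classical
  have : NeZero L := ⟨hL.ne'⟩
  have key : ∀ x : ZMod L, (phat : ZMod L) * x = ((phat * (x.val : ℤ) : ℤ) : ZMod L) := by
    intro x; simp
  have kne : ∀ x : ZMod L, (phat : ZMod L) * x ≠ 0 → ¬ (L : ℤ) ∣ phat * (x.val : ℤ) := by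
    intro x hx h
    rw [key, Ne, ZMod.intCast_zmod_eq_zero_iff_dvd] at hx
    exact hx h
  let c : ZMod L → ℤ := fun x => colC L (phat * (x.val : ℤ))
  have c2 : ∀ x : ZMod L, (phat : ZMod L) * x ≠ 0 → c (2 * x) = - c x := by
    intro x hx
    refine colC_two L phat hL hodd hphat hdvd hsq hp _ _ (Dvd.intro _ rfl) (kne x hx) ?_
    rw [← ZMod.intCast_zmod_eq_zero_iff_dvd]
    push_cast
    simp; ring
  have cn : ∀ x : ZMod L, (phat : ZMod L) * x ≠ 0 → c (-x) = c x := by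
    intro x hx
    refine colC_neg L phat hL hphat hdvd hsq hp _ _ (Dvd.intro _ rfl) (kne x hx) ?_
    rw [← ZMod.intCast_zmod_eq_zero_iff_dvd]
    push_cast
    simp
  have c1 : ∀ x : ZMod L, (phat : ZMod L) * x ≠ 0 → c x = 1 ∨ c x = -1 := by
    intro x hx
    exact (colC_prime L phat hL hphat hdvd hsq hp _ (Dvd.intro _ rfl) (kne x hx)).2
  have h2u : IsUnit (2 : ZMod L) := by
    have := (ZMod.isUnit_iff_coprime 2 L).2 (Nat.coprime_two_left.2 hodd)
    exact_mod_cast this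
  have h2n : ∀ x : ZMod L, (phat : ZMod L) * x ≠ 0 → (phat : ZMod L) * (2 * x) ≠ 0 := by
    intro x hx h
    apply hx
    rw [mul_left_comm] at h
    exact h2u.mul_right_eq_zero.1 h
  let P := Finset.univ.filter (fun x : ZMod L => (phat : ZMod L) * x ≠ 0 ∧ c x = 1)
  let N := Finset.univ.filter (fun x : ZMod L => (phat : ZMod L) * x ≠ 0 ∧ c x = -1)
  let K := Finset.univ.filter (fun x : ZMod L => (phat : ZMod L) * x = 0)
  refine ⟨P, ?_, ?_, ?_, ?_⟩
  · intro x hx; exact (mem_filter.1 hx).2.1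
  · intro x hx
    obtain ⟨-, h1, h2⟩ := mem_filter.1 hx
    exact mem_filter.2 ⟨mem_univ _, by simpa using h1, by rw [cn x h1, h2]⟩
  · intro x hx h
    obtain ⟨-, h1, h2⟩ := mem_filter.1 hx
    obtain ⟨-, h3, h4⟩ := mem_filter.1 h
    rw [c2 x h1, h2] at h4
    norm_num at h4
  · have hNP : N.card ≤ P.card := by
      apply Finset.card_le_card_of_injOn (fun x => 2 * x)
      · intro x hx
        obtain ⟨-, h1, h2⟩ := mem_filter.1 hx
        exact mem_filter.2 ⟨mem_univ _, h2n x h1, by rw [c2 x h1, h2]; norm_num⟩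
      · intro x _ y _ h
        exact h2u.mul_left_cancel h
    have hK : K.card ≤ phat := by
      obtain ⟨m, hm⟩ := hdvd
      have : K ⊆ (range phat).image (fun j => ((m * j : ℕ) : ZMod L)) := by
        intro x hx
        obtain ⟨-, h1⟩ := mem_filter.1 hx
        rw [key, ZMod.intCast_zmod_eq_zero_iff_dvd] at h1
        have h1 : L ∣ phat * x.val := by exact_mod_cast h1
        have h3 : phat * m ∣ phat * x.val := by rw [← hm]; exact h1
        obtain ⟨j, hj⟩ := Nat.dvd_of_mul_dvd_mul_left hphat.pos h3
        refine mem_image.2 ⟨j, ?_, ?_⟩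
        · rw [mem_range]
          have := x.val_lt
          by_contra hcon
          have : m * phat ≤ m * j := Nat.mul_le_mul_left _ (by omega)
          rw [mul_comm m phat, ← hm, ← hj] at this
          omega
        · show ((m * j : ℕ) : ZMod L) = x
          rw [← hj]; simp
      calc K.card ≤ _ := card_le_card this
        _ ≤ _ := card_image_le
        _ = phat := card_range _
    have hU : (univ : Finset (ZMod L)) ⊆ (P ∪ N) ∪ K := by
      intro x _
      by_cases h : (phat : ZMod L) * x = 0
      · simp [K, h]
      · rcases c1 x h with h' | h'
        · simp [P, h, h']
        · simp [N, h, h']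
    have := card_le_card hU
    rw [card_univ, ZMod.card] at this
    have h1 := card_union_le (P ∪ N) K
    have h2 := card_union_le P N
    omega

lemma pow_two_safe (p : ℕ) (hp : p.Prime) (h3 : p ≠ 3) (hsafe : ((p - 1) / 2).Prime)
    (hmod : p % 4 = 3) (i j : ℕ) (hi : i < (p - 1) / 2) (hj : j < (p - 1) / 2)
    (h : (2 : ZMod p) ^ i = 2 ^ j ∨ (2 : ZMod p) ^ i = - 2 ^ j) :
    i = j := by
  have := Fact.mk hp
  have h4 : orderOf (4 : ZMod p) = (p - 1) / 2 := by
    have h20 : (2 : ZMod p) ≠ 0 := by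
      intro h
      have : ((2 : ℕ) : ZMod p) = 0 := by exact_mod_cast h
      rw [ZMod.natCast_eq_zero_iff] at this
      have := Nat.le_of_dvd (by norm_num) this
      interval_cases p <;> omega
    have h30 : (3 : ZMod p) ≠ 0 := by
      intro h
      have : ((3 : ℕ) : ZMod p) = 0 := by exact_mod_cast h
      rw [ZMod.natCast_eq_zero_iff] at this
      exact h3 ((Nat.prime_dvd_prime_iff_eq hp Nat.prime_three).1 this)
    have := Fact.mk hsafe
    apply orderOf_eq_prime
    · have := ZMod.pow_card_sub_one_eq_one h20
      rw [show (4 : ZMod p) = 2 ^ 2 by norm_num, ← pow_mul]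
      rwa [show 2 * ((p - 1) / 2) = p - 1 by omega]
    · intro h; apply h30; linear_combination h
  have h5 : (4 : ZMod p) ^ i = 4 ^ j := by
    rw [show (4 : ZMod p) = 2 ^ 2 by norm_num, ← pow_mul, ← pow_mul, mul_comm, mul_comm 2 j,
      pow_mul, pow_mul]
    rcases h with h | h <;> rw [h]; ring
  exact pow_injOn_Iio_orderOf (by simpa [h4] using hi) (by simpa [h4] using hj) h5

lemma exists_B (L phat : ℕ) (hL : 0 < L) (hphat : phat.Prime) (hdvd : phat ∣ L)
    (h3 : phat ≠ 3) (hsafe : ((phat - 1) / 2).Prime) (hmod : phat % 4 = 3) :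
    ∃ G : Finset (ZMod L), (∀ x ∈ G, (phat : ZMod L) * x = 0) ∧ (∀ x ∈ G, -x ∈ G) ∧
      (∀ x ∈ G, 2 * x ∉ G) ∧ (0 : ZMod L) ∉ G ∧ phat ≤ 2 * G.card + 3 := by
  classical
  have := Fact.mk hphat
  obtain ⟨m, hm⟩ := hdvd
  have hm0 : 0 < m := by
    rcases Nat.eq_zero_or_pos m with h | h
    · subst h; omega
    · exact h
  have tr : ∀ a : ℤ, (m : ZMod L) * (a : ZMod L) = 0 → (a : ZMod phat) = 0 := by
    intro a h
    have h1 : (((m : ℤ) * a : ℤ) : ZMod L) = 0 := by push_cast; exact h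
    rw [ZMod.intCast_zmod_eq_zero_iff_dvd] at h1
    rw [ZMod.intCast_zmod_eq_zero_iff_dvd]
    rw [hm] at h1
    push_cast at h1
    rw [mul_comm (phat : ℤ)] at h1
    exact Int.dvd_of_mul_dvd_mul_left (by exact_mod_cast hm0.ne') h1
  have h20 : (2 : ZMod phat) ≠ 0 := by
    intro h
    have : ((2 : ℕ) : ZMod phat) = 0 := by exact_mod_cast h
    rw [ZMod.natCast_eq_zero_iff] at this
    have := Nat.le_of_dvd (by norm_num) this
    interval_cases phat <;> omega
  have k0 : ∀ i : ℕ, (m : ZMod L) * 2 ^ i ≠ 0 := by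
    intro i h
    have := tr (2 ^ i) (by push_cast; exact h)
    push_cast at this
    exact pow_ne_zero i h20 this
  have k1 : ∀ i j : ℕ, i < (phat - 1) / 2 → j < (phat - 1) / 2 →
      (m : ZMod L) * 2 ^ i = m * 2 ^ j → i = j := by
    intro i j hi hj h
    have := tr (2 ^ i - 2 ^ j) (by push_cast; linear_combination h)
    push_cast at this
    exact pow_two_safe phat hphat h3 hsafe hmod i j hi hj (Or.inl (by linear_combination this))
  have k2 : ∀ i j : ℕ, i < (phat - 1) / 2 → j < (phat - 1) / 2 →
      (m : ZMod L) * 2 ^ i = - (m * 2 ^ j) → i = j := by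
    intro i j hi hj h
    have := tr (2 ^ i + 2 ^ j) (by push_cast; linear_combination h)
    push_cast at this
    exact pow_two_safe phat hphat h3 hsafe hmod i j hi hj (Or.inr (by linear_combination this))
  let T := (range ((phat - 3) / 4)).image (fun i : ℕ => (m : ZMod L) * 2 ^ (2 * i))
  let S := (range ((phat - 3) / 4)).image (fun i : ℕ => -((m : ZMod L) * 2 ^ (2 * i)))
  have mem : ∀ x, x ∈ T ∪ S ↔ ∃ i < (phat - 3) / 4,
      x = (m : ZMod L) * 2 ^ (2 * i) ∨ x = -((m : ZMod L) * 2 ^ (2 * i)) := by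
    intro x
    simp only [T, S, mem_union, mem_image, mem_range]
    constructor
    · rintro (⟨i, h, rfl⟩ | ⟨i, h, rfl⟩)
      · exact ⟨i, h, Or.inl rfl⟩
      · exact ⟨i, h, Or.inr rfl⟩
    · rintro ⟨i, h, rfl | rfl⟩
      · exact Or.inl ⟨i, h, rfl⟩
      · exact Or.inr ⟨i, h, rfl⟩
  refine ⟨T ∪ S, ?_, ?_, ?_, ?_, ?_⟩
  · intro x hx
    have e : (phat : ZMod L) * m = 0 := by
      have := ZMod.natCast_self L
      rw [← Nat.cast_mul, ← hm]; exact this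
    obtain ⟨i, hi, rfl | rfl⟩ := (mem x).1 hx
    · linear_combination 2 ^ (2 * i) * e
    · linear_combination - 2 ^ (2 * i) * e
  · intro x hx
    obtain ⟨i, hi, rfl | rfl⟩ := (mem x).1 hx
    · exact (mem _).2 ⟨i, hi, Or.inr rfl⟩
    · exact (mem _).2 ⟨i, hi, Or.inl (neg_neg _)⟩
  · intro x hx hx2
    obtain ⟨i, hi, h⟩ := (mem x).1 hx
    obtain ⟨j, hj, h'⟩ := (mem _).1 hx2
    have hii : 2 * i + 1 < (phat - 1) / 2 := by omega
    have hjj : 2 * j < (phat - 1) / 2 := by omega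
    have : 2 * i + 1 = 2 * j := by
      rcases h with rfl | rfl <;> rcases h' with h' | h'
      · exact k1 _ _ hii hjj (by rw [← h']; ring)
      · exact k2 _ _ hii hjj (by rw [← h']; ring)
      · exact k2 _ _ hii hjj (by rw [← h']; ring)
      · exact k1 _ _ hii hjj (by rw [← neg_inj, ← h']; ring)
    omega
  · intro hx
    obtain ⟨i, hi, h | h⟩ := (mem _).1 hx
    · exact k0 _ h.symm
    · exact k0 _ (neg_eq_zero.1 h.symm)
  · have hdis : Disjoint T S := by
      rw [Finset.disjoint_left]
      intro x hx hx'
      obtain ⟨i, hi, rfl⟩ := mem_image.1 hx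
      obtain ⟨j, hj, h⟩ := mem_image.1 hx'
      rw [mem_range] at hi hj
      have := k2 (2 * i) (2 * j) (by omega) (by omega) h.symm
      rw [← this] at h
      apply k0 (2 * i + 1)
      rw [pow_succ]
      linear_combination -h
    have hT : T.card = (phat - 3) / 4 := by
      rw [card_image_of_injOn, card_range]
      intro i hi j hj h
      simp only [coe_range, Set.mem_Iio] at hi hj
      have := k1 (2 * i) (2 * j) (by omega) (by omega) h
      omega
    have hS : S.card = (phat - 3) / 4 := by
      rw [card_image_of_injOn, card_range]
      intro i hi j hj h
      simp only [coe_range, Set.mem_Iio] at hi hj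
      have := k1 (2 * i) (2 * j) (by omega) (by omega) (neg_inj.1 h)
      omega
    rw [card_union_of_disjoint hdis, hT, hS]
    omega

lemma mem_dstar_iff {L : ℕ} (I : Finset (ZMod L)) (x : ZMod L) :
    x ∈ dstar I ↔ (∃ a ∈ I, ∃ b ∈ I, a - b = x) ∧ x ≠ 0 := by
  simp [dstar, dset]
  grind

lemma four_le_dstar {L : ℕ} (h2 : ∀ x : ZMod L, 2 * x = 0 → x = 0)
    (h3 : ∀ x : ZMod L, 3 * x = 0 → x = 0) (I : Finset (ZMod L)) (hI : I.card = 3) :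
    4 ≤ (dstar I).card := by
  classical
  obtain ⟨a, b, c, hab, hac, hbc, rfl⟩ := card_eq_three.1 hI
  have four : ∀ u v : ZMod L, u ≠ 0 → v ≠ 0 → u ≠ v → u ≠ -v →
      ({u, -u, v, -v} : Finset (ZMod L)).card = 4 := by
    intro u v hu hv h1 h2'
    have e1 : u ≠ -u := fun h => hu (h2 u (by linear_combination h))
    have e2 : v ≠ -v := fun h => hv (h2 v (by linear_combination h))
    have e3 : -u ≠ v := fun h => h2' (by rw [← h, neg_neg])
    have e4 : -u ≠ -v := fun h => h1 (neg_inj.1 h)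
    rw [card_insert_of_notMem (by simp [e1, h1, h2']),
      card_insert_of_notMem (by simp only [mem_insert, mem_singleton]; tauto), card_pair e2]
  have sub : ∀ u v : ZMod L, u ≠ 0 → v ≠ 0 → u ≠ v → u ≠ -v → u ∈ dstar {a, b, c} →
      -u ∈ dstar {a, b, c} → v ∈ dstar {a, b, c} → -v ∈ dstar {a, b, c} →
      4 ≤ (dstar {a, b, c}).card := by
    intro u v hu hv h1 h2' m1 m2 m3 m4
    rw [← four u v hu hv h1 h2']
    apply card_le_card
    intro x hx
    simp only [mem_insert, mem_singleton] at hx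
    rcases hx with rfl | rfl | rfl | rfl <;> assumption
  have m : ∀ x ∈ ({a, b, c} : Finset (ZMod L)), ∀ y ∈ ({a, b, c} : Finset (ZMod L)), x ≠ y →
      x - y ∈ dstar {a, b, c} ∧ -(x - y) ∈ dstar {a, b, c} := by
    intro x hx y hy h
    refine ⟨(mem_dstar_iff _ _).2 ⟨⟨x, hx, y, hy, rfl⟩, sub_ne_zero.2 h⟩,
      (mem_dstar_iff _ _).2 ⟨⟨y, hy, x, hx, by ring⟩, neg_ne_zero.2 (sub_ne_zero.2 h)⟩⟩
  have m1 := m a (by simp) b (by simp) hab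
  have m2 := m b (by simp) c (by simp) hbc
  have m3 := m a (by simp) c (by simp) hac
  by_cases h : a - b = b - c
  · refine sub (a - b) (a - c) (sub_ne_zero.2 hab) (sub_ne_zero.2 hac) ?_ ?_ m1.1 m1.2 m3.1 m3.2
    · intro h'
      exact hbc (by linear_combination -h')
    · intro h'
      exact sub_ne_zero.2 hab (h3 _ (by linear_combination h' + h))
  · refine sub (a - b) (b - c) (sub_ne_zero.2 hab) (sub_ne_zero.2 hbc) h ?_ m1.1 m1.2 m2.1 m2.2
    intro h'
    exact hac (by linear_combination h')

lemma mod_four_of_primes (m : ℕ) (hm : m ≠ 0) (h : ∀ p : ℕ, p.Prime → p ∣ m → p % 4 = 1) :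
    m % 4 = 1 := by
  induction m using Nat.recOnMul with
  | zero => exact absurd rfl hm
  | one => rfl
  | prime p hp => exact h p hp dvd_rfl
  | mul a b ha hb =>
    have ha' := ha (by rintro rfl; simp at hm) (fun p hp hd => h p hp (hd.mul_right b))
    have hb' := hb (by rintro rfl; simp at hm) (fun p hp hd => h p hp (hd.mul_left a))
    rw [Nat.mul_mod, ha', hb']

theorem MCAC_one_safe_prime (L phat : ℕ) (hL : 3 < L) (hodd : Odd L) (h3 : ¬ 3 ∣ L)
    (hphat : phat.Prime) (hdvd : phat ∣ L) (hsafe : ((phat - 1) / 2).Prime)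
    (hmod : phat % 4 = 3) (hsq : ¬ phat ^ 2 ∣ L)
    (hp : ∀ p : ℕ, p.Prime → p ∣ L → p ≠ phat → p % 8 = 5) :
    MCAC L 3 = (L - 3) / 4 ∧ MeCAC L 3 = (L - 3) / 4 := by
  classical
  have hL0 : 0 < L := by omega
  have : NeZero L := ⟨hL0.ne'⟩
  have hp3 : phat ≠ 3 := by rintro rfl; exact h3 hdvd
  have h2u : IsUnit (2 : ZMod L) := by
    have := (ZMod.isUnit_iff_coprime 2 L).2 (Nat.coprime_two_left.2 hodd)
    exact_mod_cast this
  have h3u : IsUnit (3 : ZMod L) := by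
    have := (ZMod.isUnit_iff_coprime 3 L).2 ((Nat.Prime.coprime_iff_not_dvd Nat.prime_three).2 h3)
    exact_mod_cast this
  have h2 : ∀ x : ZMod L, 2 * x = 0 → x = 0 := fun x => h2u.mul_right_eq_zero.1
  have h3' : ∀ x : ZMod L, 3 * x = 0 → x = 0 := fun x => h3u.mul_right_eq_zero.1
  -- the generators
  obtain ⟨A, A1, A2, A3, A4⟩ := exists_A L phat hL0 hodd hphat hdvd hsq hp
  obtain ⟨B, B1, B2, B3, B0, B4⟩ := exists_B L phat hL0 hphat hdvd hp3 hsafe hmod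
  obtain ⟨G, G0, Gn, Gd, Gc⟩ : ∃ G : Finset (ZMod L), (0 : ZMod L) ∉ G ∧ (∀ x ∈ G, -x ∈ G) ∧
      (∀ x ∈ G, 2 * x ∉ G) ∧ L ≤ 2 * G.card + 3 := by
    refine ⟨A ∪ B, ?_, ?_, ?_, ?_⟩
    · intro h
      rcases mem_union.1 h with h | h
      · exact A1 0 h (mul_zero _)
      · exact B0 h
    · intro x h
      rcases mem_union.1 h with h | h
      · exact mem_union_left _ (A2 x h)
      · exact mem_union_right _ (B2 x h)
    · intro x h h'
      rcases mem_union.1 h with h | h <;> rcases mem_union.1 h' with h' | h'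
      · exact A3 x h h'
      · apply A1 x h
        apply h2
        rw [mul_left_comm]
        exact B1 _ h'
      · apply A1 _ h'
        rw [mul_left_comm, B1 x h, mul_zero]
      · exact B3 x h h'
    · rw [card_union_of_disjoint]
      · omega
      · rw [Finset.disjoint_left]
        intro x h h'
        exact A1 x h (B1 x h')
  let H := G.filter (fun x => 2 * x.val ≤ L)
  have HG : ∀ x ∈ H, x ∈ G := fun x hx => (mem_filter.1 hx).1
  have H0 : ∀ x ∈ H, x ≠ 0 := fun x hx h => G0 (h ▸ HG x hx)
  have Hn : ∀ x ∈ H, -x ∉ H := by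
    intro x hx hx'
    have := H0 x hx
    have h1 := (mem_filter.1 hx).2
    have h2 := (mem_filter.1 hx').2
    have : NeZero x := ⟨this⟩
    rw [ZMod.val_neg_of_ne_zero] at h2
    have := x.val_lt
    obtain ⟨k, hk⟩ := hodd
    omega
  have Hc : G.card ≤ 2 * H.card := by
    have : G ⊆ H ∪ H.image (fun x => -x) := by
      intro x hx
      by_cases h : 2 * x.val ≤ L
      · exact mem_union_left _ (mem_filter.2 ⟨hx, h⟩)
      · refine mem_union_right _ (mem_image.2 ⟨-x, mem_filter.2 ⟨Gn x hx, ?_⟩, neg_neg x⟩)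
        have : NeZero x := ⟨fun h => G0 (h ▸ hx)⟩
        rw [ZMod.val_neg_of_ne_zero]
        omega
    have h1 := card_le_card this
    have h2 := card_union_le H (H.image (fun x => -x))
    have h3 : (H.image (fun x => -x)).card ≤ H.card := card_image_le
    omega
  let w : ZMod L → Finset (ZMod L) := fun g => {0, g, 2 * g}
  have dw : ∀ g x, x ∈ dstar (w g) → x = g ∨ x = -g ∨ x = 2 * g ∨ x = -(2 * g) := by
    intro g x hx
    obtain ⟨⟨a, ha, b, hb, rfl⟩, hne⟩ := (mem_dstar_iff _ _).1 hx
    simp only [w, mem_insert, mem_singleton] at ha hb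
    rcases ha with rfl | rfl | rfl <;> rcases hb with rfl | rfl | rfl
    · simp at hne
    · right; left; ring
    · right; right; right; ring
    · left; ring
    · simp at hne
    · right; left; ring
    · right; right; left; ring
    · left; ring
    · simp at hne
  have dw' : ∀ g, g ≠ 0 → g ∈ dstar (w g) := by
    intro g hg
    exact (mem_dstar_iff _ _).2 ⟨⟨g, by simp [w], 0, by simp [w], sub_zero g⟩, hg⟩
  have dis : ∀ g ∈ H, ∀ h ∈ H, g ≠ h → Disjoint (dstar (w g)) (dstar (w h)) := by
    intro g hg h hh hne
    have f1 : g ≠ -h := fun e => Hn h hh (e ▸ hg)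
    have f2 : g ≠ 2 * h := fun e => Gd h (HG h hh) (e ▸ HG g hg)
    have f3 : g ≠ -(2 * h) := fun e => Gd h (HG h hh) (by
      have := Gn g (HG g hg)
      rwa [e, neg_neg] at this)
    have f4 : h ≠ 2 * g := fun e => Gd g (HG g hg) (e ▸ HG h hh)
    have f5 : h ≠ -(2 * g) := fun e => Gd g (HG g hg) (by
      have := Gn h (HG h hh)
      rwa [e, neg_neg] at this)
    rw [Finset.disjoint_left]
    intro x hx hx'
    rcases dw g x hx with rfl | rfl | rfl | rfl <;> rcases dw h _ hx' with e | e | e | e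
    · exact hne e
    · exact f1 e
    · exact f2 e
    · exact f3 e
    · exact f1 (by linear_combination -e)
    · exact hne (by linear_combination -e)
    · exact f3 (by linear_combination -e)
    · exact f2 (by linear_combination -e)
    · exact f4 e.symm
    · exact f5 (by linear_combination e)
    · exact hne (sub_eq_zero.1 (h2 _ (by linear_combination e)))
    · exact f1 (eq_neg_of_add_eq_zero_left (h2 _ (by linear_combination e)))
    · exact f5 e.symm
    · exact f4 (by linear_combination e)
    · exact f1 (eq_neg_of_add_eq_zero_left (h2 _ (by linear_combination -e)))
    · exact hne (sub_eq_zero.1 (h2 _ (by linear_combination -e)))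
  have winj : Set.InjOn w H := by
    intro g hg h hh e
    by_contra hne
    have := dis g hg h hh hne
    rw [← e, Finset.disjoint_left] at this
    exact this (dw' g (H0 g hg)) (dw' g (H0 g hg))
  have upper : ∀ C : Finset (Finset (ZMod L)), IsCAC L 3 C → 4 * C.card ≤ L - 1 := by
    intro C ⟨hC, hD⟩
    have h1 : (C.biUnion dstar).card = ∑ I ∈ C, (dstar I).card := card_biUnion hD
    have h4 : C.card * 4 ≤ ∑ I ∈ C, (dstar I).card := by
      rw [← smul_eq_mul]
      exact card_nsmul_le_sum C _ 4 (fun I hI => four_le_dstar h2 h3' I (hC I hI))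
    have h5 : C.biUnion dstar ⊆ Finset.univ.erase 0 := by
      intro x hx
      obtain ⟨I, hI, hx⟩ := mem_biUnion.1 hx
      exact mem_erase.2 ⟨((mem_dstar_iff _ _).1 hx).2, mem_univ _⟩
    have h6 := card_le_card h5
    rw [card_erase_of_mem (mem_univ _), card_univ, ZMod.card] at h6
    omega
  have cac : IsCAC L 3 (H.image w) := by
    constructor
    · intro I hI
      obtain ⟨g, hg, rfl⟩ := mem_image.1 hI
      have g0 := H0 g hg
      refine card_eq_three.2 ⟨0, g, 2 * g, g0.symm, fun e => g0 (h2 g e.symm), ?_, rfl⟩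
      intro e
      exact g0 (by linear_combination -e)
    · intro I hI J hJ hne
      obtain ⟨g, hg, rfl⟩ := mem_image.1 hI
      obtain ⟨h, hh, rfl⟩ := mem_image.1 hJ
      exact dis g hg h hh (fun e => hne (by rw [e]))
  have ed : ∀ I ∈ H.image w, IsEquiDiff I := by
    intro I hI
    obtain ⟨g, hg, rfl⟩ := mem_image.1 hI
    refine ⟨g.val, ?_, (mem_filter.1 hg).2, ?_⟩
    · have : g.val ≠ 0 := fun h => H0 g hg ((ZMod.val_eq_zero g).1 h)
      omega
    · simp [w]
  have hcard : (H.image w).card = H.card := card_image_of_injOn winj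
  have hmod4 : L % 4 = 3 := by
    obtain ⟨m, hm⟩ := hdvd
    have := mod_four_of_primes m (by rintro rfl; omega) (by
      intro p hpp hd
      have := hp p hpp (hm ▸ hd.mul_left phat) (by
        rintro rfl
        exact hsq (by rw [hm, pow_two]; exact mul_dvd_mul_left _ hd))
      omega)
    rw [hm, Nat.mul_mod, hmod, this]
  have up := upper _ cac
  have hval : (H.image w).card = (L - 3) / 4 := by omega
  constructor
  · apply IsGreatest.csSup_eq
    refine ⟨⟨_, cac, hval⟩, ?_⟩
    rintro n ⟨C, hC, rfl⟩
    have := upper C hC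
    omega
  · apply IsGreatest.csSup_eq
    refine ⟨⟨_, cac, ed, hval⟩, ?_⟩
    rintro n ⟨C, hC, -, rfl⟩
    have := upper C hC
    omega
end
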